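/- arXiv:2101.05229 — 8 statements merged into one kernel-verified Lean document; each statement's English description precedes it below -/
import Mathlib

section
/- Let $G$ be a weakly perfect graph (i.e., a graph whose clique number equals its chromatic number) with $m \geq 1$ edges, adjacency eigenvalues $\mu_1 \geq \mu_2 \geq \cdots \geq \mu_n$, clique number $\omega$, and $n^+$ positive adjacency eigenvalues. Then $\mu_1^2 + \mu_2^2 + \cdots + \mu_\ell^2 \leq \frac{2m(\omega - 1)}{\omega}$, where $\ell = \min(n^+, \omega)$. -/
open Matrix in
theorem aux_psd {V : Type*} [Fintype V] [DecidableEq V] (B : Matrix V V ℝ) (r : ℕ) (c : V → Fin r) :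
    ∑ u, ∑ v, ((Bᵀ * B) u v) ^ 2 ≤
      r * ∑ u, ∑ v, if c u = c v then ((Bᵀ * B) u v) ^ 2 else 0 := by
  have key : ∀ f : V → V → ℝ, ∑ w, ∑ w', ∑ u, ∑ v, f u v * (B w u * B w' u) * (B w v * B w' v)
      = ∑ u, ∑ v, f u v * ((Bᵀ * B) u v) ^ 2 := by
    intro f
    have h1 : ∀ u v, f u v * ((Bᵀ * B) u v) ^ 2
        = ∑ w, ∑ w', f u v * (B w u * B w' u) * (B w v * B w' v) := by
      intro u v
      rw [sq, Matrix.mul_apply, Finset.sum_mul_sum, Finset.mul_sum]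
      refine Finset.sum_congr rfl fun w _ => ?_
      rw [Finset.mul_sum]
      refine Finset.sum_congr rfl fun w' _ => ?_
      simp only [Matrix.transpose_apply]
      ring
    simp_rw [h1]
    calc _ = ∑ w, ∑ u, ∑ w', ∑ v, f u v * (B w u * B w' u) * (B w v * B w' v) :=
          Finset.sum_congr rfl fun w _ => Finset.sum_comm
      _ = ∑ u, ∑ w, ∑ w', ∑ v, f u v * (B w u * B w' u) * (B w v * B w' v) := Finset.sum_comm
      _ = ∑ u, ∑ w, ∑ v, ∑ w', f u v * (B w u * B w' u) * (B w v * B w' v) :=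
          Finset.sum_congr rfl fun u _ => Finset.sum_congr rfl fun w _ => Finset.sum_comm
      _ = _ := Finset.sum_congr rfl fun u _ => Finset.sum_comm
  have k1 := key (fun _ _ => 1)
  have k2 := key (fun u v => if c u = c v then 1 else 0)
  simp only [one_mul] at k1
  simp only [ite_mul, one_mul, zero_mul] at k2
  rw [← k1, ← k2, Finset.mul_sum]
  refine Finset.sum_le_sum fun w _ => ?_
  rw [Finset.mul_sum]
  refine Finset.sum_le_sum fun w' _ => ?_
  have e1 : ∑ u, ∑ v, (B w u * B w' u) * (B w v * B w' v)
      = (∑ k : Fin r, ∑ u, if c u = k then B w u * B w' u else 0) ^ 2 := by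
    have e0 : (∑ k : Fin r, ∑ u, if c u = k then B w u * B w' u else 0)
        = ∑ u, B w u * B w' u := by
      rw [Finset.sum_comm]
      simp
    rw [e0, sq, Finset.sum_mul_sum]
  have e2 : (∑ u, ∑ v, if c u = c v then (B w u * B w' u) * (B w v * B w' v) else 0)
      = ∑ k : Fin r, (∑ u, if c u = k then B w u * B w' u else 0) ^ 2 := by
    simp_rw [sq, Finset.sum_mul_sum]
    symm
    rw [Finset.sum_comm]
    refine Finset.sum_congr rfl fun u _ => ?_
    rw [Finset.sum_comm]
    refine Finset.sum_congr rfl fun v _ => ?_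
    simp only [ite_mul, zero_mul, Finset.sum_ite_eq, Finset.mem_univ, if_true, mul_ite, mul_zero]
    try simp only [eq_comm]
  rw [e1, e2]
  simpa using sq_sum_le_card_mul_sum_sq (s := (Finset.univ : Finset (Fin r)))
    (f := fun k => ∑ u, if c u = k then B w u * B w' u else 0)

open Matrix in
theorem aux_main {V : Type*} [Fintype V] [DecidableEq V] (B X Y : Matrix V V ℝ) (r : ℕ)
    (c : V → Fin r) (hr : 0 < r) (hX : X = Bᵀ * B) (hXY : ∑ u, ∑ v, X u v * Y u v = 0)
    (hd : ∀ u v, c u = c v → X u v = Y u v) :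
    (r : ℝ) * (∑ u, ∑ v, X u v ^ 2) ≤
      (r - 1) * (∑ u, ∑ v, X u v ^ 2 + ∑ u, ∑ v, Y u v ^ 2) := by
  have hp := aux_psd B r c
  rw [← hX] at hp
  simp only [← Fintype.sum_prod_type'] at *
  set S := (Finset.univ : Finset (V × V)).filter (fun x => ¬ c x.1 = c x.2) with hS
  set D := (Finset.univ : Finset (V × V)).filter (fun x => c x.1 = c x.2) with hD
  have hCS := Finset.sum_mul_sq_le_sq_mul_sq S (fun x => X x.1 x.2) (fun x => Y x.1 x.2)
  rw [← Finset.sum_filter, ← hD] at hp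
  have s1 := Finset.sum_filter_add_sum_filter_not Finset.univ (fun x : V × V => c x.1 = c x.2)
    (fun x => X x.1 x.2 ^ 2)
  have s2 := Finset.sum_filter_add_sum_filter_not Finset.univ (fun x : V × V => c x.1 = c x.2)
    (fun x => Y x.1 x.2 ^ 2)
  have s3 := Finset.sum_filter_add_sum_filter_not Finset.univ (fun x : V × V => c x.1 = c x.2)
    (fun x => X x.1 x.2 * Y x.1 x.2)
  rw [← hS, ← hD] at s1 s2 s3
  have d2 : ∑ x ∈ D, Y x.1 x.2 ^ 2 = ∑ x ∈ D, X x.1 x.2 ^ 2 :=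
    Finset.sum_congr rfl fun x hx => by rw [hd _ _ (by simpa [hD] using hx)]
  have d3 : ∑ x ∈ D, X x.1 x.2 * Y x.1 x.2 = ∑ x ∈ D, X x.1 x.2 ^ 2 :=
    Finset.sum_congr rfl fun x hx => by rw [hd _ _ (by simpa [hD] using hx)]; ring
  have hq0 : 0 ≤ ∑ x : V × V, Y x.1 x.2 ^ 2 := by positivity
  have hp0 : 0 ≤ ∑ x : V × V, X x.1 x.2 ^ 2 := by positivity
  have hr0 : (0 : ℝ) ≤ r := by positivity
  rw [d2] at s2
  rw [d3, hXY] at s3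
  generalize (∑ x : V × V, X x.1 x.2 ^ 2) = p at *
  generalize (∑ x : V × V, Y x.1 x.2 ^ 2) = q at *
  generalize (∑ x ∈ D, X x.1 x.2 ^ 2) = d at *
  generalize (∑ x ∈ S, X x.1 x.2 * Y x.1 x.2) = t at *
  generalize (∑ x ∈ S, X x.1 x.2 ^ 2) = a at *
  generalize (∑ x ∈ S, Y x.1 x.2 ^ 2) = b at *
  have ht : t = -d := by linarith
  have ha : a = p - d := by linarith
  have hb : b = q - d := by linarith
  subst ht ha hb
  have h1 : d * (p + q) ≤ p * q := by nlinarith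
  have h2 : p * (p + q) ≤ p * (r * q) := by nlinarith
  rcases hp0.eq_or_lt with h | h
  · subst h
    have : (1 : ℝ) ≤ r := by exact_mod_cast hr
    nlinarith
  · have := le_of_mul_le_mul_left h2 h
    linarith

open Matrix in
theorem aux_spec {V : Type*} [Fintype V] [DecidableEq V] (A : Matrix V V ℝ) (hA : A.IsHermitian) :
    ∃ B X Y : Matrix V V ℝ, X = Bᵀ * B ∧ A = X - Y ∧ (∑ u, ∑ v, X u v * Y u v = 0) ∧
      ∑ u, ∑ v, X u v ^ 2 = ∑ v, (max (hA.eigenvalues v) 0) ^ 2 := by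
  set U : Matrix V V ℝ := (hA.eigenvectorUnitary : Matrix V V ℝ) with hU
  have hUU : Uᵀ * U = 1 := by
    have := Unitary.coe_star_mul_self hA.eigenvectorUnitary
    simpa [Matrix.star_eq_conjTranspose, Matrix.conjTranspose_eq_transpose_of_trivial] using this
  have hsp : A = U * diagonal hA.eigenvalues * Uᵀ := by
    have := hA.spectral_theorem
    simpa [Unitary.conjStarAlgAut_apply, Matrix.star_eq_conjTranspose,
      Matrix.conjTranspose_eq_transpose_of_trivial, Function.comp_def] using this
  set l := hA.eigenvalues
  have hmul : ∀ f g : V → ℝ, ∑ u, ∑ v, (U * diagonal f * Uᵀ) u v * (U * diagonal g * Uᵀ) u v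
      = ∑ v, f v * g v := by
    intro f g
    have : (U * diagonal f * Uᵀ) * (U * diagonal g * Uᵀ)ᵀ
        = U * diagonal (fun v => f v * g v) * Uᵀ := by
      simp only [transpose_mul, transpose_transpose, diagonal_transpose]
      calc _ = U * diagonal f * (Uᵀ * U) * diagonal g * Uᵀ := by simp only [Matrix.mul_assoc]
        _ = _ := by rw [hUU, Matrix.mul_one, Matrix.mul_assoc U, diagonal_mul_diagonal]
    have h2 := congrArg Matrix.trace this
    rw [Matrix.trace_mul_comm (U * _), ← Matrix.mul_assoc, hUU, Matrix.one_mul,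
      Matrix.trace_diagonal] at h2
    rw [← h2]
    simp only [Matrix.trace, Matrix.diag_apply, Matrix.mul_apply (N := (U * diagonal g * Uᵀ)ᵀ),
      Matrix.transpose_apply (U * diagonal g * Uᵀ)]
  refine ⟨diagonal (fun v => √(max (l v) 0)) * Uᵀ, U * diagonal (fun v => max (l v) 0) * Uᵀ,
    U * diagonal (fun v => max (-l v) 0) * Uᵀ, ?_, ?_, ?_, ?_⟩
  · rw [transpose_mul, transpose_transpose, diagonal_transpose]
    have : diagonal (fun v => max (l v) 0) = diagonal (fun v => √(max (l v) 0)) *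
        diagonal (fun v => √(max (l v) 0)) := by
      rw [diagonal_mul_diagonal]
      congr 1
      ext v
      exact (Real.mul_self_sqrt (le_max_right _ _)).symm
    rw [this]
    simp only [Matrix.mul_assoc]
  · rw [← Matrix.sub_mul, ← Matrix.mul_sub, diagonal_sub, hsp]
    congr 3
    ext v
    rcases le_total (l v) 0 with h | h
    · rw [max_eq_right h, max_eq_left (by linarith)]; ring
    · rw [max_eq_left h, max_eq_right (by linarith)]; ring
  · rw [hmul]
    refine Finset.sum_eq_zero fun v _ => ?_
    rcases le_total (l v) 0 with h | h
    · rw [max_eq_right h]; ring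
    · rw [max_eq_right (a := -l v) (by linarith)]; ring
  · simp only [sq]
    rw [hmul]

/-- **Generalised Bollobás–Nikiforov conjecture for weakly perfect graphs.**
If `G` is a weakly perfect graph (its clique number equals its chromatic number)
with at least one edge, and `μ 0 ≥ μ 1 ≥ ⋯` is the nonincreasing enumeration of the
eigenvalues of its adjacency matrix, then
`μ 0 ^ 2 + ⋯ + μ (ℓ-1) ^ 2 ≤ 2 m (ω - 1) / ω`, where `ℓ = min(n⁺, ω)`,
`n⁺` is the number of positive eigenvalues, `ω` the clique number and `m` the
number of edges. -/
theorem weakly_perfect_sum_sq_eigenvalues_le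
    {V : Type*} [Fintype V] [DecidableEq V]
    (G : SimpleGraph V) [DecidableRel G.Adj]
    (hA : (G.adjMatrix ℝ).IsHermitian)
    (μ : Fin (Fintype.card V) → ℝ) (hanti : Antitone μ)
    (e : V ≃ Fin (Fintype.card V)) (heig : ∀ v : V, μ (e v) = hA.eigenvalues v)
    (hweak : (G.cliqueNum : ℕ∞) = G.chromaticNumber)
    (hm : 1 ≤ G.edgeFinset.card) :
    ∑ i ∈ Finset.univ.filter (fun i : Fin (Fintype.card V) =>
        (i : ℕ) < min (Nat.card {j : Fin (Fintype.card V) // 0 < μ j}) G.cliqueNum),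
      μ i ^ 2
    ≤ 2 * (G.edgeFinset.card : ℝ) * ((G.cliqueNum : ℝ) - 1) / (G.cliqueNum : ℝ) := by
  obtain ⟨B, X, Y, hX, hAXY, hXY, hp⟩ := aux_spec _ hA
  have hcol : G.Colorable G.cliqueNum :=
    SimpleGraph.chromaticNumber_le_iff_colorable.mp hweak.symm.le
  obtain ⟨c⟩ := hcol
  have hd : ∀ u v, c u = c v → X u v = Y u v := by
    intro u v h
    have h1 : G.adjMatrix ℝ u v = X u v - Y u v := by rw [hAXY]; rfl
    have h2 : ¬ G.Adj u v := fun ha => c.valid ha h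
    rw [SimpleGraph.adjMatrix_apply, if_neg h2] at h1
    linarith
  have hr : 0 < G.cliqueNum := by
    obtain ⟨x, hx⟩ := Finset.card_pos.mp hm
    obtain ⟨u, v⟩ := x
    exact (c u).pos
  have hmain := aux_main B X Y G.cliqueNum c hr hX hXY hd
  have h2m : ∑ u, ∑ v, X u v ^ 2 + ∑ u, ∑ v, Y u v ^ 2 = 2 * (G.edgeFinset.card : ℝ) := by
    have h1 : ∑ u, ∑ v, (G.adjMatrix ℝ u v) = 2 * (G.edgeFinset.card : ℝ) := by
      have := G.sum_degrees_eq_twice_card_edges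
      have h3 : ((∑ v, G.degree v : ℕ) : ℝ) = 2 * (G.edgeFinset.card : ℝ) := by
        rw [this]; push_cast; ring
      rw [← h3]
      push_cast
      refine Finset.sum_congr rfl fun u _ => ?_
      simp [SimpleGraph.adjMatrix_apply, ← SimpleGraph.card_neighborFinset_eq_degree,
        SimpleGraph.neighborFinset_eq_filter]
    have h2 : ∑ u, ∑ v, (G.adjMatrix ℝ u v) =
        ∑ u, ∑ v, (X u v ^ 2 + Y u v ^ 2 - 2 * (X u v * Y u v)) := by
      refine Finset.sum_congr rfl fun u _ => Finset.sum_congr rfl fun v _ => ?_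
      have h1 : G.adjMatrix ℝ u v = X u v - Y u v := by rw [hAXY]; rfl
      have h4 : G.adjMatrix ℝ u v = G.adjMatrix ℝ u v ^ 2 := by
        rw [SimpleGraph.adjMatrix_apply]; split_ifs <;> norm_num
      rw [h4, h1]; ring
    simp only [Finset.sum_sub_distrib, Finset.sum_add_distrib, ← Finset.mul_sum] at h2
    rw [hXY] at h2
    linarith
  have hr' : (0 : ℝ) < G.cliqueNum := by exact_mod_cast hr
  rw [h2m, hp] at hmain
  have hsum : ∑ v, (max (hA.eigenvalues v) 0) ^ 2 = ∑ i, (max (μ i) 0) ^ 2 := by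
    simp only [← heig]
    exact Equiv.sum_comp e (fun i => (max (μ i) 0) ^ 2)
  rw [hsum] at hmain
  have hle : ∑ i ∈ Finset.univ.filter (fun i : Fin (Fintype.card V) =>
        (i : ℕ) < min (Nat.card {j : Fin (Fintype.card V) // 0 < μ j}) G.cliqueNum),
      μ i ^ 2 ≤ ∑ i, (max (μ i) 0) ^ 2 := by
    refine le_trans (Finset.sum_le_sum fun i hi => ?_)
      (Finset.sum_le_sum_of_subset_of_nonneg (Finset.filter_subset _ _)
        fun i _ _ => sq_nonneg _)
    have hi2 := lt_of_lt_of_le (Finset.mem_filter.mp hi).2 (min_le_left _ _)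
    have hpos : 0 < μ i := by
      by_contra hn
      push Not at hn
      rw [Nat.card_eq_fintype_card, Fintype.card_subtype] at hi2
      have hsub : Finset.univ.filter (fun j => 0 < μ j) ⊆ Finset.Iio i := by
        intro j hj
        rw [Finset.mem_Iio]
        by_contra hji
        have := hanti (not_lt.mp hji)
        have h0 := (Finset.mem_filter.mp hj).2
        linarith
      have := Finset.card_le_card hsub
      rw [Fin.card_Iio] at this
      omega
    rw [max_eq_left hpos.le]
  rw [le_div_iff₀ hr']
  nlinarith
end

section
/- Let $G$ be a strongly regular graph with parameters $(n, d, \lambda, \mu)$, $0 < d < n - 1$, with $m$ edges, adjacency eigenvalues $\mu_1 \geq \mu_2 \geq \cdots \geq \mu_n$, $n^+$ positive adjacency eigenvalues, least adjacency eigenvalue $s = \mu_n$, and clique number $\omega$. If $\omega = 1 - d/s$, then $\mu_1^2 + \mu_2^2 + \cdots + \mu_\ell^2 \leq \frac{2m(\omega - 1)}{\omega}$, where $\ell = \min(n^+, \omega)$. -/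
open Matrix in
lemma aux_trace_sq {V : Type*} [Fintype V] [DecidableEq V] {A : Matrix V V ℝ}
    (hA : A.IsHermitian) : (A * A).trace = ∑ v, hA.eigenvalues v ^ 2 := by
  set U : Matrix V V ℝ := (hA.eigenvectorUnitary : Matrix V V ℝ) with hU
  have h1 : star U * U = 1 := Unitary.coe_star_mul_self _
  have h := hA.spectral_theorem
  rw [Unitary.conjStarAlgAut_apply, ← hU] at h
  set D : Matrix V V ℝ := diagonal (RCLike.ofReal ∘ hA.eigenvalues) with hD
  have h2 : A * A = U * (D * D) * star U := by
    calc A * A = (U * D * star U) * (U * D * star U) := by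
            conv_lhs => rw [h]
      _ = U * D * (star U * U) * D * star U := by simp only [Matrix.mul_assoc]
      _ = _ := by rw [h1]; simp only [Matrix.mul_assoc, Matrix.one_mul]
  rw [h2, Matrix.trace_mul_comm, ← Matrix.mul_assoc, h1, Matrix.one_mul, hD,
    Matrix.diagonal_mul_diagonal, Matrix.trace_diagonal]
  simp [sq]

open Matrix in
lemma aux_eig {V : Type*} [Fintype V] [DecidableEq V]
    (G : SimpleGraph V) [DecidableRel G.Adj]
    (n d lam mu : ℕ) (hsrg : G.IsSRGWith n d lam mu)
    (hA : (G.adjMatrix ℝ).IsHermitian) (v : V) :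
    hA.eigenvalues v = d ∨
      hA.eigenvalues v ^ 2 - ((lam : ℝ) - mu) * hA.eigenvalues v - ((d : ℝ) - mu) = 0 := by
  set x := hA.eigenvalues v with hx
  set f : V → ℝ := ⇑(hA.eigenvectorBasis v) with hf
  have hAf : G.adjMatrix ℝ *ᵥ f = x • f := hA.mulVec_eigenvectorBasis v
  have hf0 : f ≠ 0 := by
    intro h0
    have := hA.eigenvectorBasis.orthonormal.ne_zero v
    apply this
    ext i
    exact congrFun h0 i
  by_cases hxd : x = d
  · exact Or.inl hxd
  right
  have hsum : ∑ i, f i = 0 := by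
    have h1 : ∑ i, (G.adjMatrix ℝ *ᵥ f) i = d * ∑ i, f i := by
      have : (fun _ => (1:ℝ)) ᵥ* G.adjMatrix ℝ = fun _ => (d:ℝ) := by
        ext i
        simp [SimpleGraph.adjMatrix_vecMul_apply, hsrg.regular i]
      have h2 : (fun _ => (1:ℝ)) ⬝ᵥ (G.adjMatrix ℝ *ᵥ f) = (fun _ => (d:ℝ)) ⬝ᵥ f := by
        rw [Matrix.dotProduct_mulVec, this]
      simpa [dotProduct, Finset.mul_sum] using h2
    rw [hAf] at h1
    simp only [Pi.smul_apply, smul_eq_mul, ← Finset.mul_sum] at h1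
    have h3 : (x - d) * ∑ i, f i = 0 := by linarith
    rcases mul_eq_zero.1 h3 with h | h
    · exact absurd (by linarith) hxd
    · exact h
  have hM := hsrg.matrix_eq (α := ℝ)
  obtain ⟨i, hi⟩ := Function.ne_iff.1 hf0
  have hi' : f i ≠ 0 := hi
  have hL : ((G.adjMatrix ℝ ^ 2) *ᵥ f) i = x ^ 2 * f i := by
    rw [sq, ← Matrix.mulVec_mulVec, hAf, Matrix.mulVec_smul, hAf]
    simp; ring
  have hC : (Gᶜ.adjMatrix ℝ *ᵥ f) i = - f i - x * f i := by
    have hJ : Gᶜ.adjMatrix ℝ = Matrix.of (fun _ _ => (1:ℝ)) - 1 - G.adjMatrix ℝ := by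
      ext a b
      by_cases hab : a = b
      · subst hab; simp
      · by_cases hG : G.Adj a b <;> simp [hab, hG]
    rw [hJ, Matrix.sub_mulVec, Matrix.sub_mulVec, hAf, Matrix.one_mulVec]
    have : (Matrix.of (fun _ _ => (1:ℝ)) *ᵥ f) i = ∑ j, f j := by
      simp [Matrix.mulVec, dotProduct]
    simp only [Pi.sub_apply, Pi.smul_apply, smul_eq_mul]
    rw [this, hsum]; ring
  rw [hM, Matrix.add_mulVec, Matrix.add_mulVec, Matrix.smul_mulVec, Matrix.smul_mulVec,
    Matrix.smul_mulVec, Matrix.one_mulVec, hAf] at hL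
  simp only [Pi.add_apply, Pi.smul_apply] at hL
  rw [hC] at hL
  simp only [nsmul_eq_mul, smul_eq_mul] at hL
  have : (x ^ 2 - ((lam : ℝ) - mu) * x - ((d : ℝ) - mu)) * f i = 0 := by
    linarith
  exact (mul_eq_zero.1 this).resolve_right hi'

/-- **Generalised Bollobás–Nikiforov conjecture for Type C strongly regular graphs.**
Let `G` be a strongly regular graph with parameters `(n, d, lam, mu)`, `0 < d < n - 1`,
with nonincreasing adjacency eigenvalues `μ 0 ≥ μ 1 ≥ ⋯` and least eigenvalue `s`.
If the clique number satisfies `ω = 1 - d / s`, then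
`μ 0 ^ 2 + ⋯ + μ (ℓ-1) ^ 2 ≤ 2 m (ω - 1) / ω`, where `ℓ = min(n⁺, ω)`,
`n⁺` is the number of positive eigenvalues and `m` the number of edges. -/
theorem srg_typeC_sum_sq_eigenvalues_le
    {V : Type*} [Fintype V] [DecidableEq V]
    (G : SimpleGraph V) [DecidableRel G.Adj]
    (n d lam mu : ℕ) (hsrg : G.IsSRGWith n d lam mu)
    (hd0 : 0 < d) (hdn : d < n - 1)
    (hA : (G.adjMatrix ℝ).IsHermitian)
    (μ : Fin (Fintype.card V) → ℝ) (hanti : Antitone μ)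
    (e : V ≃ Fin (Fintype.card V)) (heig : ∀ v : V, μ (e v) = hA.eigenvalues v)
    (s : ℝ) (hs : IsLeast (Set.range μ) s)
    (homega : (G.cliqueNum : ℝ) = 1 - (d : ℝ) / s) :
    ∑ i ∈ Finset.univ.filter (fun i : Fin (Fintype.card V) =>
        (i : ℕ) < min (Nat.card {j : Fin (Fintype.card V) // 0 < μ j}) G.cliqueNum),
      μ i ^ 2
    ≤ 2 * (G.edgeFinset.card : ℝ) * ((G.cliqueNum : ℝ) - 1) / (G.cliqueNum : ℝ) := by
  classical
  have hcard := hsrg.card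
  have hn : 0 < n := by omega
  -- parameter bounds
  obtain ⟨v₀⟩ : Nonempty V := Fintype.card_pos_iff.1 (hcard ▸ hn)
  have hlam : lam < d := by
    have h0 : 0 < G.degree v₀ := by rw [hsrg.regular v₀]; exact hd0
    obtain ⟨w, hw⟩ := (G.degree_pos_iff_exists_adj v₀).1 h0
    have := hw.card_commonNeighbors_lt_degree
    rwa [hsrg.of_adj _ _ hw, hsrg.regular v₀] at this
  have hmu : mu ≤ d := by
    have h0 : 0 < Gᶜ.degree v₀ := by
      rw [hsrg.compl_is_regular v₀]; omega
    obtain ⟨w, hw⟩ := (Gᶜ.degree_pos_iff_exists_adj v₀).1 h0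
    rw [SimpleGraph.compl_adj] at hw
    have := G.card_commonNeighbors_le_degree_left v₀ w
    rwa [hsrg.of_not_adj hw.1 hw.2, hsrg.regular v₀] at this
  -- edges
  have hm : 2 * (G.edgeFinset.card : ℝ) = n * d := by
    have h := G.sum_degrees_eq_twice_card_edges
    rw [Finset.sum_congr rfl (fun v _ => hsrg.regular v), Finset.sum_const, Finset.card_univ,
      hcard, smul_eq_mul] at h
    exact_mod_cast h.symm
  -- traces
  have hS1 : ∑ i, μ i = 0 := by
    rw [← Equiv.sum_comp e]
    simp only [heig]
    have := hA.trace_eq_sum_eigenvalues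
    simpa using this.symm
  have hS2 : ∑ i, μ i ^ 2 = n * d := by
    rw [← Equiv.sum_comp e]
    simp only [heig]
    rw [← aux_trace_sq hA]
    have hdiag : ∀ v, (G.adjMatrix ℝ * G.adjMatrix ℝ) v v = (d : ℝ) := fun v => by
      rw [SimpleGraph.adjMatrix_mul_self_apply_self, hsrg.regular v]
    simp only [Matrix.trace, Matrix.diag, hdiag, Finset.sum_const, Finset.card_univ, hcard,
      nsmul_eq_mul]
  have hE : ∀ i, μ i = d ∨ μ i ^ 2 - ((lam : ℝ) - mu) * μ i - ((d : ℝ) - mu) = 0 := by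
    intro i
    have := aux_eig G n d lam mu hsrg hA (e.symm i)
    rwa [← heig, e.apply_symm_apply] at this
  have hdR : (0:ℝ) < d := by exact_mod_cast hd0
  have hnR : (0:ℝ) < n := by exact_mod_cast hn
  have hlamR : (lam:ℝ) + 1 ≤ d := by exact_mod_cast hlam
  have hmuR : (mu:ℝ) ≤ d := by exact_mod_cast hmu
  obtain ⟨⟨i₀, hi₀⟩, hleast⟩ := hs
  have hle : ∀ i, s ≤ μ i := fun i => hleast ⟨i, rfl⟩
  have hsneg : s < 0 := by
    by_contra hcon
    push Not at hcon
    have hz := (Finset.sum_eq_zero_iff_of_nonneg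
      (fun i _ => hcon.trans (hle i))).1 hS1
    have : ∑ i, μ i ^ 2 = 0 := Finset.sum_eq_zero fun i hi => by rw [hz i hi]; ring
    have h2 : (0:ℝ) < n * d := by positivity
    linarith
  have hps : s ^ 2 - ((lam : ℝ) - mu) * s - ((d : ℝ) - mu) = 0 := by
    rcases hE i₀ with h | h
    · rw [hi₀] at h; linarith
    · rwa [hi₀] at h
  obtain ⟨r, hr⟩ : ∃ r : ℝ, r = (lam : ℝ) - mu - s := ⟨_, rfl⟩
  have hrs : r * s = mu - d := by rw [hr]; linarith
  have hr0 : 0 ≤ r := by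
    by_contra hcon
    push Not at hcon
    have := mul_pos_of_neg_of_neg hcon hsneg
    linarith
  have hs1 : s ≤ -1 := by
    by_contra hcon
    push Not at hcon
    have : 0 < (1 + r) * (1 + s) := mul_pos (by linarith) (by linarith)
    nlinarith
  have hE' : ∀ i, μ i ≠ s → (μ i - r) * (μ i - d) = 0 := by
    intro i hi
    rcases hE i with h | h
    · rw [h]; ring
    · have h2 : (μ i - r) * (μ i - s) = 0 := by
        have : (lam : ℝ) - mu = r + s := by linarith
        rw [this] at h
        linarith
      rcases mul_eq_zero.1 h2 with h3 | h3
      · rw [h3]; ring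
      · exact absurd (by linarith) hi
  set T : Finset (Fin (Fintype.card V)) := Finset.univ.filter (fun i => μ i = s) with hT
  set g : ℝ := (T.card : ℝ) with hg
  have hgeq : g * ((s - r) * (s - d)) = n * d + n * (r * d) := by
    have h1 : ∑ i, (μ i - r) * (μ i - d) = g * ((s - r) * (s - d)) := by
      rw [← Finset.sum_filter_add_sum_filter_not Finset.univ (fun i => μ i = s)]
      rw [Finset.sum_eq_zero (s := Finset.univ.filter (fun i => ¬ μ i = s))
        (fun i hi => hE' i (Finset.mem_filter.1 hi).2), add_zero]
      rw [Finset.sum_congr rfl (g := fun _ => (s - r) * (s - d))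
        (fun i hi => by rw [(Finset.mem_filter.1 hi).2])]
      rw [Finset.sum_const, nsmul_eq_mul]
    have h2 : ∑ i, (μ i - r) * (μ i - d)
        = ∑ i, μ i ^ 2 - (r + d) * ∑ i, μ i + n * (r * d) := by
      rw [Finset.mul_sum, ← Finset.sum_sub_distrib]
      have : (n : ℝ) * (r * d) = ∑ _i : Fin (Fintype.card V), r * (d:ℝ) := by
        simp [hcard]
      rw [this, ← Finset.sum_add_distrib]
      exact Finset.sum_congr rfl fun i _ => by ring
    rw [← h1, h2, hS1, hS2]; ring
  have hTsum : ∑ i ∈ Finset.univ.filter (fun i => ¬ μ i = s), μ i ^ 2 = n * d - g * s ^ 2 := by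
    have h := Finset.sum_filter_add_sum_filter_not Finset.univ (fun i => μ i = s)
      (fun i => μ i ^ 2)
    rw [Finset.sum_congr rfl (g := fun _ => s ^ 2)
        (fun i hi => by rw [(Finset.mem_filter.1 hi).2]), Finset.sum_const, nsmul_eq_mul, hS2] at h
    linarith
  have hpos : ∀ i : Fin (Fintype.card V),
      (i : ℕ) < Nat.card {j : Fin (Fintype.card V) // 0 < μ j} → 0 < μ i := by
    intro i hi
    by_contra hcon
    rw [Nat.card_eq_fintype_card, Fintype.card_subtype] at hi
    have hsub : Finset.univ.filter (fun j => 0 < μ j) ⊆ Finset.Iio i := by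
      intro j hj
      rw [Finset.mem_Iio]
      by_contra hji
      push Not at hji
      exact hcon (lt_of_lt_of_le (Finset.mem_filter.1 hj).2 (hanti hji))
    have := Finset.card_le_card hsub
    rw [Fin.card_Iio] at this
    omega
  have hstep : ∑ i ∈ Finset.univ.filter (fun i : Fin (Fintype.card V) =>
        (i : ℕ) < min (Nat.card {j : Fin (Fintype.card V) // 0 < μ j}) G.cliqueNum),
      μ i ^ 2 ≤ n * d - g * s ^ 2 := by
    rw [← hTsum]
    apply Finset.sum_le_sum_of_subset_of_nonneg
    · intro i hi
      rw [Finset.mem_filter] at hi ⊢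
      have := hpos i (lt_of_lt_of_le hi.2 (min_le_left _ _))
      exact ⟨hi.1, by intro h; linarith⟩
    · intros; positivity
  refine hstep.trans ?_
  rw [hm, homega]
  have hsne : s ≠ 0 := hsneg.ne
  have hds : 0 < d - s := by linarith
  have hR : (n:ℝ) * d * (1 - d / s - 1) / (1 - d / s) = n * d * d / (d - s) := by
    have h1 : 1 - d / s = (s - d) / s := by field_simp
    have h2 : s - d ≠ 0 := by linarith
    have h3 : (d:ℝ) - s ≠ 0 := hds.ne'
    rw [show (1:ℝ) - d / s - 1 = - d / s by ring, h1]
    field_simp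
    ring
  rw [hR, le_div_iff₀ hds]
  -- need `n d ≤ g (-s) (d - s)`
  have hkr : 0 < r - s := by linarith
  have hkey : (n:ℝ) * d ≤ g * (-s) * (d - s) := by
    have h1 : (n * d) * (r - s) ≤ (g * (-s) * (d - s)) * (r - s) := by
      have h2 : (g * (-s) * (d - s)) * (r - s) = (-s) * (n * d + n * (r * d)) := by
        rw [← hgeq]; ring
      rw [h2]
      have h3 : 0 ≤ (n * d) * r * (-s - 1) := by
        apply mul_nonneg (by positivity); linarith
      nlinarith
    exact le_of_mul_le_mul_right h1 hkr
  nlinarith [mul_le_mul_of_nonneg_left hkey (by linarith : 0 ≤ -s)]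
end

section
/- Let $G$ be a strongly regular graph with parameters $(n, d, 1, \mu)$ with $0 < d < n-1$ and $\mu \geq 1$, with $m$ edges, adjacency eigenvalues $\mu_1 \geq \mu_2 \geq \cdots \geq \mu_n$, $n^+$ positive adjacency eigenvalues, and clique number $\omega$. Then $\mu_1^2 + \mu_2^2 + \cdots + \mu_\ell^2 \leq \frac{2m(\omega - 1)}{\omega}$, where $\ell = \min(n^+, \omega)$. -/
open Finset Matrix in
lemma srgaux_eig {V : Type*} [Fintype V] [DecidableEq V]
    (G : SimpleGraph V) [DecidableRel G.Adj]
    (n d mu : ℕ) (hsrg : G.IsSRGWith n d 1 mu) (v : V → ℝ) (x : ℝ)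
    (hv : G.adjMatrix ℝ *ᵥ v = x • v) :
    (∀ u, x ^ 2 * v u = d * v u + x * v u + mu * (∑ w, v w - v u - x * v u)) ∧
      x * ∑ w, v w = d * ∑ w, v w := by
  constructor
  · intro u
    have h := hsrg.matrix_eq (α := ℝ)
    have h1 : (G.adjMatrix ℝ ^ 2) *ᵥ v = (x ^ 2) • v := by
      rw [pow_two, ← Matrix.mulVec_mulVec, hv, Matrix.mulVec_smul, hv, smul_smul, pow_two]
    have h3 : Gᶜ.adjMatrix ℝ = Matrix.of (fun _ _ => (1:ℝ)) - 1 - G.adjMatrix ℝ := by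
      ext a b
      by_cases hab : a = b
      · subst hab; simp
      · by_cases hh : G.Adj a b <;> simp [hab, hh, Matrix.one_apply]
    have h4 : (Matrix.of (fun _ _ => (1:ℝ)) : Matrix V V ℝ) *ᵥ v = fun _ => ∑ w, v w := by
      ext a
      simp [Matrix.mulVec, dotProduct]
    rw [h, h3, Matrix.add_mulVec, Matrix.add_mulVec] at h1
    simp only [Matrix.smul_mulVec, Matrix.sub_mulVec, Matrix.one_mulVec, hv, h4] at h1
    have h5 := congrFun h1 u
    simp at h5
    linarith
  · have h1 : (fun _ => (1:ℝ)) ⬝ᵥ (G.adjMatrix ℝ *ᵥ v) = x * ∑ w, v w := by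
      rw [hv]; simp [dotProduct, Finset.mul_sum]
    rw [← h1, Matrix.dotProduct_mulVec]
    have h2 : (fun _ => (1:ℝ)) ᵥ* G.adjMatrix ℝ = fun _ => (d:ℝ) := by
      ext a
      rw [SimpleGraph.adjMatrix_vecMul_apply]
      simp [hsrg.regular a]
    rw [h2]
    simp [dotProduct, Finset.mul_sum]

lemma srgaux_poly (d mu : ℕ) (hd : 3 ≤ d) (h1 : 1 ≤ mu) (h2 : mu ≤ d) :
    (0:ℤ) ≤ 2 * d ^ 2 * (d - 2) - d ^ 2 * mu - 4 * d * mu + 6 * mu ^ 2 := by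
  by_cases h8 : d < 8
  · interval_cases d <;> interval_cases mu <;> norm_num
  · obtain ⟨t, rfl⟩ := Nat.exists_eq_add_of_le h2
    obtain ⟨s, hs⟩ := Nat.exists_eq_add_of_le (not_lt.mp h8)
    have : (mu : ℤ) = 8 + s - t := by omega
    push_cast
    rw [this]
    have : (0:ℤ) ≤ (8+s)^2*(6+s) + t * ((8+s)*s) + 6*t^2 := by positivity
    nlinarith

lemma srgaux_clique {V : Type*} [Fintype V] [DecidableEq V]
    (G : SimpleGraph V) [DecidableRel G.Adj]
    (n d mu : ℕ) (hsrg : G.IsSRGWith n d 1 mu) (hd0 : 0 < d) (v : V) : G.cliqueNum = 3 := by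
  apply le_antisymm
  · obtain ⟨s, hs⟩ := G.exists_isNClique_cliqueNum
    by_contra hc
    push Not at hc
    rw [← hs.card_eq] at hc
    obtain ⟨t, hts, ht⟩ := Finset.exists_subset_card_eq (Nat.succ_le_of_lt hc)
    have htc : G.IsNClique 4 t := ⟨hs.isClique.subset (by exact_mod_cast hts), ht⟩
    obtain ⟨a, b, c, e, nab, nac, nae, nbc, nbe, nce, rfl⟩ := Finset.card_eq_four.mp ht
    have hcl := htc.isClique
    have hab : G.Adj a b := hcl (by simp) (by simp) nab
    have hac : G.Adj a c := hcl (by simp) (by simp) nac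
    have hae : G.Adj a e := hcl (by simp) (by simp) nae
    have hbc : G.Adj b c := hcl (by simp) (by simp) nbc
    have hbe : G.Adj b e := hcl (by simp) (by simp) nbe
    have hce : G.Adj c e := hcl (by simp) (by simp) nce
    have h := hsrg.of_adj a b hab
    rw [Fintype.card_eq_one_iff] at h
    obtain ⟨z, hz⟩ := h
    have h1 := hz ⟨c, by simp [SimpleGraph.mem_commonNeighbors, *]⟩
    have h2 := hz ⟨e, by simp [SimpleGraph.mem_commonNeighbors, *]⟩
    rw [← h2] at h1
    simp at h1
    exact hce.ne h1
  · have h1 : 0 < G.degree v := by rw [hsrg.regular v]; exact hd0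
    obtain ⟨w, hw⟩ := (G.degree_pos_iff_exists_adj v).mp h1
    have h := hsrg.of_adj v w hw
    rw [Fintype.card_eq_one_iff] at h
    obtain ⟨⟨z, hz⟩, -⟩ := h
    rw [SimpleGraph.mem_commonNeighbors] at hz
    have h3 : G.IsNClique 3 {v, w, z} := SimpleGraph.is3Clique_triple_iff.mpr ⟨hw, hz.1, hz.2⟩
    rw [← h3.card_eq]
    exact h3.isClique.card_le_cliqueNum

lemma srgaux_mu_le {V : Type*} [Fintype V] [DecidableEq V]
    (G : SimpleGraph V) [DecidableRel G.Adj]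
    (n d mu : ℕ) (hsrg : G.IsSRGWith n d 1 mu) (hdn : d < n - 1) (v : V) : mu ≤ d := by
  have h : ∃ w, v ≠ w ∧ ¬ G.Adj v w := by
    by_contra hc
    push Not at hc
    have : (Finset.univ.erase v) ⊆ G.neighborFinset v := by
      intro w hw
      simp at hw ⊢
      exact hc w (Ne.symm hw)
    have := Finset.card_le_card this
    rw [SimpleGraph.card_neighborFinset_eq_degree, hsrg.regular v,
      Finset.card_erase_of_mem (Finset.mem_univ _), Finset.card_univ, hsrg.card] at this
    omega
  obtain ⟨w, hne, hw⟩ := h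
  rw [← hsrg.of_not_adj hne hw, ← hsrg.regular v]
  exact G.card_commonNeighbors_le_degree_left v w

lemma srgaux_pos {N : ℕ} (μ : Fin N → ℝ) (hanti : Antitone μ) (i : Fin N)
    (hi : (i : ℕ) < Nat.card {j : Fin N // 0 < μ j}) : 0 < μ i := by
  by_contra hc
  rw [Nat.card_eq_fintype_card, Fintype.card_subtype] at hi
  have : (Finset.univ.filter fun j => 0 < μ j) ⊆ Finset.Iio i := by
    intro j hj
    simp at hj ⊢
    by_contra hij
    exact hc (hj.trans_le (hanti (not_lt.mp hij)))
  have := Finset.card_le_card this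
  simp at this
  omega


/-- **Generalised Bollobás–Nikiforov conjecture for strongly regular graphs with `λ = 1`.**
Let `G` be a strongly regular graph with parameters `(n, d, 1, mu)`, `0 < d < n - 1`,
`mu ≥ 1`, with nonincreasing adjacency eigenvalues `μ 0 ≥ μ 1 ≥ ⋯`. Then
`μ 0 ^ 2 + ⋯ + μ (ℓ-1) ^ 2 ≤ 2 m (ω - 1) / ω`, where `ℓ = min(n⁺, ω)`,
`n⁺` is the number of positive eigenvalues, `ω` the clique number and `m` the
number of edges. -/
theorem srg_lambda_one_sum_sq_eigenvalues_le
    {V : Type*} [Fintype V] [DecidableEq V]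
    (G : SimpleGraph V) [DecidableRel G.Adj]
    (n d mu : ℕ) (hsrg : G.IsSRGWith n d 1 mu)
    (hd0 : 0 < d) (hdn : d < n - 1) (hmu : 1 ≤ mu)
    (hA : (G.adjMatrix ℝ).IsHermitian)
    (μ : Fin (Fintype.card V) → ℝ) (hanti : Antitone μ)
    (e : V ≃ Fin (Fintype.card V)) (heig : ∀ v : V, μ (e v) = hA.eigenvalues v) :
    ∑ i ∈ Finset.univ.filter (fun i : Fin (Fintype.card V) =>
        (i : ℕ) < min (Nat.card {j : Fin (Fintype.card V) // 0 < μ j}) G.cliqueNum),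
      μ i ^ 2
    ≤ 2 * (G.edgeFinset.card : ℝ) * ((G.cliqueNum : ℝ) - 1) / (G.cliqueNum : ℝ) := by
  classical
  have hcard := hsrg.card
  have hV : Nonempty V := by
    rw [← Fintype.card_pos_iff]; omega
  obtain ⟨v0⟩ := hV
  have hω := srgaux_clique G n d mu hsrg hd0 v0
  have hle := srgaux_mu_le G n d mu hsrg hdn v0
  have hpar := SimpleGraph.IsSRGWith.param_eq G hsrg (show 0 < n by omega)
  have hd3 : 3 ≤ d := by
    by_contra hc
    have h0 : d - 1 - 1 = 0 := by omega
    rw [h0, mul_zero] at hpar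
    have : 0 < (n - d - 1) * mu := Nat.mul_pos (by omega) (by omega)
    omega
  have hpos : ∀ i : Fin (Fintype.card V),
      (i : ℕ) < min (Nat.card {j : Fin (Fintype.card V) // 0 < μ j}) G.cliqueNum → 0 < μ i :=
    fun i hi => srgaux_pos μ hanti i (lt_of_lt_of_le hi (min_le_left _ _))
  set b := hA.eigenvectorBasis with hb
  have hE : ∀ u : V, _ := fun u => srgaux_eig G n d mu hsrg (⇑(b u)) (hA.eigenvalues u)
    (hA.mulVec_eigenvectorBasis u)
  have hμi : ∀ i, μ i = hA.eigenvalues (e.symm i) := fun i => by rw [← heig]; simp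
  have hmuR : (1:ℝ) ≤ mu := by exact_mod_cast hmu
  have hleR : (mu:ℝ) ≤ d := by exact_mod_cast hle
  have hd3R : (3:ℝ) ≤ d := by exact_mod_cast hd3
  -- the bad index predicate
  let P : Fin (Fintype.card V) → Prop := fun i => ∑ w, (b (e.symm i)) w ≠ 0
  have hconst : ∀ u : V, ∑ w, (b u) w ≠ 0 → ∃ c : ℝ, c ≠ 0 ∧ ∀ w, (b u) w = c := by
    intro u hu
    obtain ⟨h1, h2⟩ := hE u
    have hx : hA.eigenvalues u = d := mul_right_cancel₀ hu h2
    rw [hx] at h1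
    have hc : (0:ℝ) < (d:ℝ) ^ 2 - 2 * d + mu + mu * d := by nlinarith
    refine ⟨mu * (∑ w, (b u) w) / ((d:ℝ) ^ 2 - 2 * d + mu + mu * d), ?_, ?_⟩
    · exact div_ne_zero (mul_ne_zero (by positivity) hu) hc.ne'
    · intro w
      rw [eq_div_iff hc.ne']
      have := h1 w
      linarith
  have huniq : ∀ i j, P i → P j → i = j := by
    intro i j hi hj
    by_contra hij
    obtain ⟨c, hc, hci⟩ := hconst _ hi
    obtain ⟨c', hc', hcj⟩ := hconst _ hj
    have h0 : inner ℝ (b (e.symm i)) (b (e.symm j)) = 0 :=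
      b.orthonormal.2 (fun h => hij (e.symm.injective h))
    simp only [PiLp.inner_apply, hci, hcj] at h0
    have : (Fintype.card V : ℝ) ≠ 0 := by
      have : Fintype.card V ≠ 0 := by omega
      exact_mod_cast this
    simp [hc, hc'] at h0
    omega
  have hbound : ∀ i, 0 < μ i →
      μ i ^ 2 ≤ ((d:ℝ) - mu) + if P i then (d:ℝ) ^ 2 - (d - mu) else 0 := by
    intro i hi
    obtain ⟨h1, h2⟩ := hE (e.symm i)
    rw [← hμi] at h1 h2
    by_cases hP : P i
    · have hx : μ i = d := mul_right_cancel₀ hP h2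
      rw [if_pos hP, hx]; linarith
    · rw [if_neg hP]
      have hs : ∑ w, (b (e.symm i)) w = 0 := not_not.mp hP
      rw [hs] at h1
      have hne : b (e.symm i) ≠ 0 := b.orthonormal.ne_zero _
      obtain ⟨w, hw⟩ : ∃ w, (b (e.symm i)) w ≠ 0 := by
        by_contra hc
        push Not at hc
        exact hne (by ext w; simpa using hc w)
      have h3 : μ i ^ 2 = d + μ i + mu * (- 1 - μ i) := by
        apply mul_right_cancel₀ hw
        rw [h1 w]; ring
      nlinarith
  set S := Finset.univ.filter (fun i : Fin (Fintype.card V) =>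
        (i : ℕ) < min (Nat.card {j : Fin (Fintype.card V) // 0 < μ j}) G.cliqueNum) with hS
  have hScard : S.card ≤ 3 := by
    have : S.card ≤ (Finset.range 3).card := by
      apply Finset.card_le_card_of_injOn (fun i : Fin (Fintype.card V) => (i : ℕ))
      · intro i hi
        simp [hS, hω] at hi
        simp [hi.2]
      · intro i _ j _ h
        exact Fin.ext h
    simpa using this
  have hPcard : (S.filter P).card ≤ 1 := by
    rw [Finset.card_le_one]
    intro i hi j hj
    exact huniq i j (Finset.mem_filter.mp hi).2 (Finset.mem_filter.mp hj).2
  have hsum : ∑ i ∈ S, μ i ^ 2 ≤ (d:ℝ) ^ 2 + 2 * (d - mu) := by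
    calc ∑ i ∈ S, μ i ^ 2 ≤ ∑ i ∈ S, (((d:ℝ) - mu) + if P i then (d:ℝ) ^ 2 - (d - mu) else 0) :=
          Finset.sum_le_sum fun i hi => hbound i (hpos i (Finset.mem_filter.mp hi).2)
      _ = S.card * ((d:ℝ) - mu) + (S.filter P).card * ((d:ℝ) ^ 2 - (d - mu)) := by
          rw [Finset.sum_add_distrib, ← Finset.sum_filter]; simp only [Finset.sum_const, nsmul_eq_mul]
      _ ≤ 3 * ((d:ℝ) - mu) + 1 * ((d:ℝ) ^ 2 - (d - mu)) := by
          have a1 : (S.card : ℝ) ≤ 3 := by exact_mod_cast hScard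
          have a2 : ((S.filter P).card : ℝ) ≤ 1 := by exact_mod_cast hPcard
          have a3 : (0:ℝ) ≤ d - mu := by linarith
          have a4 : (0:ℝ) ≤ (d:ℝ) ^ 2 - (d - mu) := by nlinarith
          gcongr
      _ = _ := by ring
  refine hsum.trans ?_
  have hedge : 2 * (G.edgeFinset.card : ℝ) = n * d := by
    have h := G.sum_degrees_eq_twice_card_edges
    simp only [hsrg.regular.degree_eq, Finset.sum_const, Finset.card_univ, hcard, smul_eq_mul] at h
    exact_mod_cast h.symm
  rw [hω, hedge]
  have hpoly := srgaux_poly d mu hd3 hmu hle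
  have hpolyR : (0:ℝ) ≤ 2 * d ^ 2 * (d - 2) - d ^ 2 * mu - 4 * d * mu + 6 * mu ^ 2 := by
    exact_mod_cast hpoly
  have hparR : (d:ℝ) * (d - 2) = (n - d - 1) * mu := by
    obtain ⟨k, rfl⟩ := Nat.exists_eq_add_of_le hd3
    obtain ⟨l, hl⟩ := Nat.exists_eq_add_of_le (show 3 + k + 1 ≤ n by omega)
    have e1 : 3 + k - 1 - 1 = k + 1 := by omega
    have e2 : n - (3 + k) - 1 = l := by omega
    rw [e1, e2] at hpar
    have := congrArg (Nat.cast (R := ℝ)) hpar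
    rw [hl]
    push_cast at this ⊢
    linarith
  rw [le_div_iff₀ (by norm_num)]
  push_cast
  have hmu0 : (0:ℝ) < mu := by linarith
  refine le_of_mul_le_mul_right ?_ hmu0
  have h7 : (n:ℝ) * mu = d * (d - 2) + (d + 1) * mu := by linarith
  have h8 : (n:ℝ) * d * (3 - 1) * mu = 2 * d * (d * (d - 2) + (d + 1) * mu) := by
    rw [← h7]; ring
  rw [h8]
  nlinarith
end

section
/- For all integers $k \geq 2$ and $p \geq 2k$ (with real-valued arithmetic on binomial coefficients): $\binom{p-k}{k}^2\left(1+\frac{k(k-1)^2}{(p-k-1)^2(p-k)}\right) \leq \binom{p}{k}\binom{p-k}{k}\cdot\frac{p-2k+1}{p-k+1}$. -/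
theorem kneser_key_inequality (p k : ℕ) (hk : 2 ≤ k) (hp : 2 * k ≤ p) :
    ((p - k).choose k : ℝ) ^ 2 *
      (1 + (k : ℝ) * ((k : ℝ) - 1) ^ 2 / (((p : ℝ) - k - 1) ^ 2 * ((p : ℝ) - k)))
    ≤ (p.choose k : ℝ) * ((p - k).choose k : ℝ) *
      (((p : ℝ) - 2 * k + 1) / ((p : ℝ) - k + 1)) := by
  obtain ⟨n, rfl⟩ : ∃ n, p = n + k := ⟨p - k, by omega⟩
  obtain ⟨m, rfl⟩ : ∃ m, k = m + 1 := ⟨k - 1, by omega⟩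
  obtain ⟨d, rfl⟩ : ∃ d, n = d + (m + 1) := ⟨n - (m + 1), by omega⟩
  have hm : 1 ≤ m := by omega
  rw [Nat.add_sub_cancel]
  generalize hn : d + (m + 1) = n
  have h1 : n.choose (m + 1) * (m + 1) = n.choose m * (d + 1) := by
    rw [Nat.choose_succ_right_eq]; congr 1; omega
  have h2 : (n + (m + 1)) * (n + m).choose m = (n + (m + 1)).choose (m + 1) * (m + 1) :=
    Nat.add_one_mul_choose_eq (n + m) m
  have h3 : n.choose m * (n + 1) = (n + 1).choose m * (d + 2) := by
    have := Nat.choose_mul_succ_eq n m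
    rw [show n + 1 - m = d + 2 by omega] at this
    exact this
  have h4 : (n + 1).choose m ≤ (n + m).choose m := Nat.choose_le_choose m (by omega)
  have h5 : n.choose m * (n + 1) ≤ (n + m).choose m * n := by
    rw [h3]; exact Nat.mul_le_mul h4 (by omega)
  have h6 : n.choose (m + 1) * (n + (m + 1)) * (n + 1)
      ≤ (n + (m + 1)).choose (m + 1) * (d + 1) * n := by
    refine Nat.le_of_mul_le_mul_right (c := m + 1) ?_ (by omega)
    calc _ = (n.choose m * (n + 1)) * ((d + 1) * (n + (m + 1))) := by
          linear_combination ((n + (m + 1)) * (n + 1)) * h1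
      _ ≤ ((n + m).choose m * n) * ((d + 1) * (n + (m + 1))) := Nat.mul_le_mul_right _ h5
      _ = _ := by linear_combination ((d + 1) * n) * h2
  have h6' : (n.choose (m + 1) : ℝ) * (n + (m + 1)) * (n + 1)
      ≤ (n + (m + 1)).choose (m + 1) * (d + 1) * n := by exact_mod_cast h6
  have hnr : (n : ℝ) = d + (m + 1) := by rw [← hn]; push_cast; ring
  have hd0 : (0 : ℝ) ≤ d := Nat.cast_nonneg d
  have hm1 : (1 : ℝ) ≤ m := by exact_mod_cast hm
  have hn0 : (0 : ℝ) < n := by linarith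
  have hC : (0 : ℝ) ≤ n.choose (m + 1) := Nat.cast_nonneg _
  push_cast
  rw [show (n : ℝ) + (m + 1) - (m + 1) = n by ring,
    show (n : ℝ) + (m + 1) - 2 * (m + 1) + 1 = d + 1 by rw [hnr]; ring,
    show (m : ℝ) + 1 - 1 = m by ring]
  have hb : 1 + ((m : ℝ) + 1) * m ^ 2 / ((n - 1) ^ 2 * n) ≤ (n + (m + 1)) / n := by
    rw [add_div, div_self hn0.ne']
    gcongr 1 + ?_
    have hn1 : (0 : ℝ) < n - 1 := by linarith
    rw [div_le_div_iff₀ (by positivity) hn0]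
    have : (m : ℝ) ^ 2 ≤ (n - 1) ^ 2 := by
      apply pow_le_pow_left₀ <;> linarith
    calc ((m : ℝ) + 1) * m ^ 2 * n ≤ (m + 1) * (n - 1) ^ 2 * n := by gcongr
      _ = _ := by ring
  have hc : (n.choose (m + 1) : ℝ) * ((n + (m + 1)) / n)
      ≤ (n + (m + 1)).choose (m + 1) * ((d + 1) / (n + 1)) := by
    rw [← mul_div_assoc, ← mul_div_assoc, div_le_div_iff₀ hn0 (by positivity)]
    exact h6'
  calc _ ≤ (n.choose (m + 1) : ℝ) ^ 2 * ((n + (m + 1)) / n) := by gcongr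
    _ = (n.choose (m + 1) : ℝ) * (n.choose (m + 1) * ((n + (m + 1)) / n)) := by ring
    _ ≤ (n.choose (m + 1) : ℝ) * ((n + (m + 1)).choose (m + 1) * ((d + 1) / (n + 1))) := by gcongr
    _ = _ := by ring
end

section
/- For all integers $k \geq 2$ and $p \geq 2k$ (with real-valued arithmetic): $\binom{p-k+1}{k}\left(1+\frac{k(k-1)^2}{(p-k-1)^2(p-k)}\right) \leq \binom{p}{k}$. -/
theorem kneser_aux (n j m : ℕ) :
    n.choose (j+1) * (n + (j+1) * m) ≤ n * (n+m).choose (j+1) := by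
  induction m with
  | zero => simp [mul_comm]
  | succ m ih =>
    have h1 : (n+(m+1)).choose (j+1) = (n+m).choose j + (n+m).choose (j+1) :=
      Nat.choose_succ_succ (n+m) j
    have h2 : n.choose j ≤ (n+m).choose j := Nat.choose_le_choose j (by omega)
    have h3 := Nat.choose_succ_right_eq n j
    have h4 : n.choose j * (n - j) ≤ (n+m).choose j * n := Nat.mul_le_mul h2 (by omega)
    rw [h1]
    nlinarith

/-- Reformulation, after cancelling and rearranging, of the key arithmetic
inequality for Kneser graphs:
`C(p-k+1,k) (1 + k(k-1)²/((p-k-1)²(p-k))) ≤ C(p,k)`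
for integers `k ≥ 2` and `p ≥ 2k`. -/
theorem kneser_key_inequality_reformulated (p k : ℕ) (hk : 2 ≤ k) (hp : 2 * k ≤ p) :
    ((p - k + 1).choose k : ℝ) *
      (1 + (k : ℝ) * ((k : ℝ) - 1) ^ 2 / (((p : ℝ) - k - 1) ^ 2 * ((p : ℝ) - k)))
    ≤ (p.choose k : ℝ) := by
  obtain ⟨j, rfl⟩ : ∃ j, k = j + 2 := ⟨k - 2, by omega⟩
  obtain ⟨d, rfl⟩ : ∃ d, p = 2 * (j + 2) + d := ⟨p - 2 * (j+2), by omega⟩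
  by_cases h0 : j = 0 ∧ d = 0
  · obtain ⟨rfl, rfl⟩ := h0
    norm_num [Nat.choose]
  have hs : (1:ℝ) ≤ (j:ℝ) + d := by
    have : 1 ≤ j + d := by omega
    exact_mod_cast this
  have e : 2 * (j + 2) + d - (j + 2) + 1 = j + d + 3 := by omega
  rw [e]
  have h := kneser_aux (j+d+3) (j+1) (j+1)
  rw [show j + d + 3 + (j+1) = 2 * (j + 2) + d by ring, show j+1+1 = j+2 by ring] at h
  have h' : ((j+d+3).choose (j+2) : ℝ) * (((j:ℝ)+d+3) + (j+2) * (j+1))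
      ≤ ((j:ℝ)+d+3) * ((2 * (j + 2) + d).choose (j+2) : ℝ) := by exact_mod_cast h
  have hj : (0:ℝ) ≤ j := Nat.cast_nonneg j
  have hd : (0:ℝ) ≤ d := Nat.cast_nonneg d
  have hn : (0:ℝ) < (j:ℝ)+d+3 := by positivity
  have key : 1 + ((j+2 : ℕ) : ℝ) * (((j+2 : ℕ) : ℝ) - 1) ^ 2 /
      ((((2 * (j + 2) + d : ℕ) : ℝ) - ((j+2 : ℕ) : ℝ) - 1) ^ 2 *
        (((2 * (j + 2) + d : ℕ) : ℝ) - ((j+2 : ℕ) : ℝ)))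
      ≤ (((j:ℝ)+d+3) + (j+2) * (j+1)) / ((j:ℝ)+d+3) := by
    push_cast
    rw [show (2 * ((j:ℝ) + 2) + d - (j + 2) - 1) = j + d + 1 by ring,
      show (2 * ((j:ℝ) + 2) + d - (j + 2)) = j + d + 2 by ring,
      show ((j:ℝ) + 2 - 1) = j + 1 by ring, add_div, div_self hn.ne']
    gcongr 1 + ?_
    rw [div_le_div_iff₀ (by positivity) hn]
    have a1 : ((j:ℝ)+1) * (j+d+3) ≤ (j+d+1)^2 * (j+d+2) := by
      have : (j:ℝ)+d+3 ≤ (j+d+1) * (j+d+2) := by nlinarith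
      calc ((j:ℝ)+1) * (j+d+3) ≤ (j+d+1) * ((j+d+1) * (j+d+2)) := by
            gcongr
            linarith
        _ = _ := by ring
    calc ((j:ℝ)+2) * (j+1)^2 * (j+d+3) = ((j:ℝ)+2) * (j+1) * ((j+1) * (j+d+3)) := by ring
      _ ≤ _ := by gcongr
  calc _ ≤ ((j+d+3).choose (j+2) : ℝ) * ((((j:ℝ)+d+3) + (j+2) * (j+1)) / ((j:ℝ)+d+3)) := by
        gcongr
    _ ≤ _ := by
        rw [← mul_div_assoc, div_le_iff₀ hn]
        linarith
end

section
/- For all integers $k \geq 3$ and $p \geq 2k$ (with real-valued arithmetic): $\left(\prod_{i=k}^{2k-2}(p-i)\right)\left(1+\frac{k(k-1)^2}{(p-k-1)^2(p-k)}\right) \leq \prod_{i=0}^{k-2}(p-i)$, i.e., $(p-k)(p-k-1)\cdots(p-2k+2)\left(1+\frac{k(k-1)^2}{(p-k-1)^2(p-k)}\right) \leq p(p-1)\cdots(p-k+2)$. -/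
theorem kneser_aux_s7 (m k : ℝ) (hm : 0 < m) (hk : 0 ≤ k) (n : ℕ) (hn : (n : ℝ) ≤ m) :
    0 ≤ (∏ j ∈ Finset.range n, (m - j)) ∧
    (∏ j ∈ Finset.range n, (m - j)) * (1 + n * k / m) ≤ ∏ j ∈ Finset.range n, (m + k - j) := by
  induction n with
  | zero => simp
  | succ n ih =>
    push_cast at hn
    obtain ⟨h0, h1⟩ := ih (by linarith)
    rw [Finset.prod_range_succ, Finset.prod_range_succ]
    have hmn : 0 ≤ m - n := by linarith
    refine ⟨mul_nonneg h0 hmn, ?_⟩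
    have hnn : (0 : ℝ) ≤ n := Nat.cast_nonneg n
    have key : (m - n) * (1 + ((n + 1 : ℕ) : ℝ) * k / m) ≤ (1 + n * k / m) * (m + k - n) := by
      have e : (1 + n * k / m) * (m + k - n) - (m - n) * (1 + ((n + 1 : ℕ) : ℝ) * k / m)
          = (n * k + n * k ^ 2) / m := by
        push_cast
        field_simp
        ring
      have : 0 ≤ (n * k + n * k ^ 2) / m := by positivity
      linarith
    calc _ = (∏ j ∈ Finset.range n, (m - j)) * ((m - n) * (1 + ((n + 1 : ℕ) : ℝ) * k / m)) := by ring
      _ ≤ (∏ j ∈ Finset.range n, (m - j)) * ((1 + n * k / m) * (m + k - n)) :=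
        mul_le_mul_of_nonneg_left key h0
      _ = (∏ j ∈ Finset.range n, (m - j)) * (1 + n * k / m) * (m + k - n) := by ring
      _ ≤ _ := mul_le_mul_of_nonneg_right h1 (by linarith)

/-- The product form of the key arithmetic inequality for Kneser graphs:
`(p-k)(p-k-1)⋯(p-2k+2) (1 + k(k-1)²/((p-k-1)²(p-k))) ≤ p(p-1)⋯(p-k+2)`
for integers `k ≥ 3` and `p ≥ 2k`. Both products have `k - 1` consecutive factors. -/
theorem kneser_product_inequality (p k : ℕ) (hk : 3 ≤ k) (hp : 2 * k ≤ p) :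
    (∏ i ∈ Finset.Icc k (2 * k - 2), ((p : ℝ) - i)) *
      (1 + (k : ℝ) * ((k : ℝ) - 1) ^ 2 / (((p : ℝ) - k - 1) ^ 2 * ((p : ℝ) - k)))
    ≤ ∏ i ∈ Finset.range (k - 1), ((p : ℝ) - i) := by
  have hk' : (3 : ℝ) ≤ k := by exact_mod_cast hk
  have hp' : 2 * (k : ℝ) ≤ p := by exact_mod_cast hp
  have hc : ((k - 1 : ℕ) : ℝ) = k - 1 := by
    rw [Nat.cast_sub (by omega)]; simp
  have hm : 0 < (p : ℝ) - k := by linarith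
  obtain ⟨h0, h1⟩ := kneser_aux_s7 ((p : ℝ) - k) k hm (by linarith) (k - 1) (by rw [hc]; linarith)
  have e1 : ∏ i ∈ Finset.Icc k (2 * k - 2), ((p : ℝ) - i)
      = ∏ j ∈ Finset.range (k - 1), ((p : ℝ) - k - j) := by
    have : Finset.Icc k (2 * k - 2) = Finset.Ico k (k + (k - 1)) := by
      ext x; simp only [Finset.mem_Icc, Finset.mem_Ico]; omega
    rw [this, Finset.prod_Ico_eq_prod_range, Nat.add_sub_cancel_left]
    refine Finset.prod_congr rfl fun j _ => ?_
    push_cast; ring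
  simp only [sub_add_cancel] at h1
  rw [e1]
  refine le_trans (mul_le_mul_of_nonneg_left ?_ h0) h1
  rw [hc]
  have hq : 0 < (p : ℝ) - k - 1 := by linarith
  have hsq : (k : ℝ) - 1 ≤ ((p : ℝ) - k - 1) ^ 2 := by nlinarith
  gcongr 1 + ?_
  rw [div_le_div_iff₀ (by positivity) hm]
  have : 0 ≤ (k : ℝ) * (k - 1) * (p - k) :=
    mul_nonneg (mul_nonneg (by linarith) (by linarith)) hm.le
  nlinarith [mul_le_mul_of_nonneg_left hsq this]
end

section
/- For all integers $k \geq 2$ and $p \geq 2k$ (with real-valued arithmetic): $(k(p-k))^2 + (p-k)\left((k-1)p-k^2\right)^2 \leq \frac{p-k}{p-k+1}\cdot k(p-k)\binom{p}{k}$. -/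
theorem jk_mono (n m : ℕ) (h3 : 3 ≤ m) (hm : m ≤ n / 2) : n.choose 3 ≤ n.choose m := by
  induction m, h3 using Nat.le_induction with
  | base => exact le_rfl
  | succ j hj ih =>
    exact (ih (by omega)).trans (Nat.choose_le_succ_of_lt_half_left (by omega))

theorem jk_three (n : ℕ) :
    6 * ((n + 2).choose 3 : ℝ) = ((n : ℝ) + 2) * (n + 1) * n := by
  have h := Nat.descFactorial_eq_factorial_mul_choose (n + 2) 3
  have h2 : (n + 2).descFactorial 3 = (n + 2) * (n + 1) * n := by
    simp [Nat.descFactorial]; ring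
  rw [h2] at h
  have : Nat.factorial 3 = 6 := rfl
  rw [this] at h
  exact_mod_cast h.symm

theorem jk_core (a c : ℕ) (h1 : 1 ≤ a) (h : a + 1 ≤ c) :
    (a : ℝ) ^ 2 * c ^ 2 - ((a : ℝ) ^ 2 - 1) * c + (a + 1) ^ 2
      ≤ c * ((c + (a + 1)).choose a : ℝ) := by
  obtain ⟨b, rfl⟩ := Nat.exists_eq_add_of_le h
  rcases Nat.lt_or_ge a 3 with h3 | h3
  · interval_cases a
    · simp only [Nat.choose_one_right]
      push_cast
      have : (0 : ℝ) ≤ b := b.cast_nonneg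
      nlinarith
    · rw [Nat.cast_choose_two]
      push_cast
      have : (0 : ℝ) ≤ b := b.cast_nonneg
      have : (0 : ℝ) ≤ b ^ 3 := by positivity
      nlinarith
  · have hm := jk_mono (a + 1 + b + (a + 1)) a h3 (by omega)
    obtain ⟨d, rfl⟩ := Nat.exists_eq_add_of_le h3
    have e : 3 + d + 1 + b + (3 + d + 1) = (2 * d + b + 6) + 2 := by ring
    rw [e] at hm ⊢
    have ht := jk_three (2 * d + b + 6)
    have hm' : ((2 * d + b + 6 + 2).choose 3 : ℝ) ≤ ((2 * d + b + 6 + 2).choose (3 + d) : ℝ) := by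
      exact_mod_cast hm
    refine le_trans ?_ (mul_le_mul_of_nonneg_left hm' (by positivity))
    have : ((2 * d + b + 6 + 2).choose 3 : ℝ) =
      (((2 * d + b + 6 : ℕ) : ℝ) + 2) * ((2 * d + b + 6 : ℕ) + 1) * (2 * d + b + 6 : ℕ) / 6 := by
      linarith
    rw [this]
    push_cast
    have hb : (0 : ℝ) ≤ b := b.cast_nonneg
    have hd : (0 : ℝ) ≤ d := d.cast_nonneg
    rw [← sub_nonneg]
    ring_nf
    positivity

/-- The key arithmetic inequality in the proof of the generalised
Bollobás–Nikiforov conjecture for Johnson graphs `J(p,k)`: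
`(k(p-k))² + (p-k)((k-1)p - k²)² ≤ ((p-k)/(p-k+1)) k (p-k) C(p,k)`
for integers `k ≥ 2` and `p ≥ 2k`. -/
theorem johnson_key_inequality (p k : ℕ) (hk : 2 ≤ k) (hp : 2 * k ≤ p) :
    ((k : ℝ) * ((p : ℝ) - k)) ^ 2
      + ((p : ℝ) - k) * (((k : ℝ) - 1) * (p : ℝ) - (k : ℝ) ^ 2) ^ 2
    ≤ (((p : ℝ) - k) / ((p : ℝ) - k + 1)) * ((k : ℝ) * ((p : ℝ) - k) * (p.choose k : ℝ)) := by
  obtain ⟨a, rfl⟩ : ∃ a, k = a + 1 := ⟨k - 1, by omega⟩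
  obtain ⟨c, rfl⟩ : ∃ c, p = c + (a + 1) := ⟨p - (a + 1), by omega⟩
  have h := jk_core a c (by omega) (by omega)
  have e := Nat.choose_succ_right_eq (c + (a + 1)) a
  have e1 : c + (a + 1) - a = c + 1 := by omega
  rw [e1] at e
  have e' : ((c + (a + 1)).choose (a + 1) : ℝ) * (a + 1) = ((c + (a + 1)).choose a : ℝ) * (c + 1) := by
    exact_mod_cast e
  have hc : (0 : ℝ) ≤ c := c.cast_nonneg
  have hR : ((((c + (a + 1) : ℕ) : ℝ) - (a + 1 : ℕ)) / (((c + (a + 1) : ℕ) : ℝ) - (a + 1 : ℕ) + 1)) *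
      (((a + 1 : ℕ) : ℝ) * (((c + (a + 1) : ℕ) : ℝ) - (a + 1 : ℕ)) * ((c + (a + 1)).choose (a + 1) : ℝ))
      = c * (c * ((c + (a + 1)).choose a : ℝ)) := by
    have : (((c + (a + 1) : ℕ) : ℝ) - (a + 1 : ℕ)) = c := by push_cast; ring
    rw [this]
    have h0 : (c : ℝ) + 1 ≠ 0 := by positivity
    field_simp
    push_cast
    linear_combination (c : ℝ) ^ 2 * e'
  rw [hR]
  refine le_trans (le_of_eq ?_) (mul_le_mul_of_nonneg_left h hc)
  push_cast
  ring
end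

section
/- Let $n, d, \mu, r, s$ be real numbers satisfying $d \geq 8$, $\mu \geq 1$, $r > 0 > s$, $r + s = 1 - \mu$, $rs = \mu - d$, and $(d-r)(d-s) = n(d + rs)$ with $d + rs > 0$. Then $d^2 + 2r^2 \leq \frac{2nd}{3}$. -/
/-- The reduction of the generalised Bollobás–Nikiforov conjecture for strongly
regular graphs with `λ = 1`. The hypotheses encode the standard identities for
the parameters and restricted eigenvalues `r > s` of an `SRG(n,d,1,μ)`; the
conclusion is `d² + 2r² ≤ 2nd/3`. -/
theorem srg_lambda_one_core (n d mu r s : ℝ)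
    (hd : 8 ≤ d) (hmu : 1 ≤ mu)
    (hr : 0 < r) (hs : s < 0)
    (hrs : r + s = 1 - mu) (hprod : r * s = mu - d)
    (heq : (d - r) * (d - s) = n * (d + r * s)) (hpos : 0 < d + r * s) :
    d ^ 2 + 2 * r ^ 2 ≤ 2 * n * d / 3 := by
  have h1 : mu < d := by nlinarith [mul_pos hr (neg_pos.2 hs)]
  have h2 : r ^ 2 ≤ d - mu := by
    have : s = 1 - mu - r := by linarith
    subst this
    nlinarith [mul_nonneg hr.le (sub_nonneg.2 hmu)]
  have h3 : n * mu = d ^ 2 - 2 * d + d * mu + mu := by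
    have e : d + r * s = mu := by linarith
    rw [e] at heq
    linear_combination -heq - d * hrs + hprod
  have h4 : mu * r ^ 2 ≤ mu * (d - mu) := mul_le_mul_of_nonneg_left h2 (by linarith)
  have h5 : 0 ≤ (d - mu) * (d ^ 2 + 4 * d - 6 * (mu + d)) :=
    mul_nonneg (by linarith) (by nlinarith)
  have h6 : 0 ≤ d ^ 2 * (d - 2) := mul_nonneg (sq_nonneg d) (by linarith)
  have h7 : mu * (d ^ 2 + 2 * r ^ 2) ≤ mu * (2 * n * d / 3) := by
    have : mu * (2 * n * d / 3) = 2 * d / 3 * (d ^ 2 - 2 * d + d * mu + mu) := by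
      rw [← h3]; ring
    rw [this]
    nlinarith
  exact le_of_mul_le_mul_left h7 (by linarith)
end
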